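/- (Strict unimodality of Gaussian coefficients) For all natural numbers ℓ, m ≥ 8 and every k with 2 ≤ k ≤ ℓm/2, one has p_k(ℓ,m) − p_{k−1}(ℓ,m) ≥ 1. -/

import Mathlib

/-- `rectPartitions k l m` is the number of integer partitions of `k` fitting in an
`l × m` rectangle: at most `l` parts, each part at most `m`. -/
noncomputable def rectPartitions (k l m : ℕ) : ℕ :=
  Nat.card {π : Nat.Partition k // Multiset.card π.parts ≤ l ∧ ∀ i ∈ π.parts, i ≤ m}

section Comb

def TT (l m k : ℕ) : Set (Multiset ℕ) :=
  {s | Multiset.card s = l ∧ (∀ i ∈ s, i ≤ m) ∧ s.sum = k}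

theorem TT_finite (l m k : ℕ) : (TT l m k).Finite := by
  refine (Set.finite_Iic (l • Multiset.range (m + 1))).subset ?_
  rintro s ⟨h1, h2, -⟩
  rw [Set.mem_Iic, Multiset.le_iff_count]
  intro a
  by_cases ha : a ∈ s
  · rw [Multiset.count_nsmul, Multiset.count_eq_one_of_mem (Multiset.nodup_range _)
      (Multiset.mem_range.2 (Nat.lt_succ_of_le (h2 a ha))), mul_one, ← h1]
    exact Multiset.count_le_card a s
  · rw [Multiset.count_eq_zero_of_notMem ha]; exact Nat.zero_le _

noncomputable def cc (l m k : ℕ) : ℕ := (TT l m k).ncard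

theorem cc_zero_left (m k : ℕ) : cc 0 m k = if k = 0 then 1 else 0 := by
  have : TT 0 m k = if k = 0 then {0} else ∅ := by
    ext s
    simp only [TT, Set.mem_ofPred_eq, Multiset.card_eq_zero]
    split_ifs with h
    · constructor
      · rintro ⟨rfl, -⟩; rfl
      · rintro rfl; simp [h]
    · constructor
      · rintro ⟨rfl, -, h2⟩; simp at h2; omega
      · rintro ⟨⟩
  rw [cc, this]
  split_ifs <;> simp

theorem cc_zero_right (l k : ℕ) : cc l 0 k = if k = 0 then 1 else 0 := by
  have : TT l 0 k = if k = 0 then {Multiset.replicate l 0} else ∅ := by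
    ext s
    simp only [TT, Set.mem_ofPred_eq]
    have key : Multiset.card s = l → (∀ i ∈ s, i ≤ 0) → s = Multiset.replicate l 0 := by
      intro h1 h2
      rw [Multiset.eq_replicate]
      exact ⟨h1, fun b hb => Nat.le_zero.1 (h2 b hb)⟩
    split_ifs with h
    · constructor
      · rintro ⟨h1, h2, -⟩; exact key h1 h2
      · rintro rfl
        refine ⟨by simp, fun i hi => (Multiset.eq_of_mem_replicate hi).le, by simp [h]⟩
    · constructor
      · rintro ⟨h1, h2, h3⟩; rw [key h1 h2] at h3; simp at h3; omega
      · rintro ⟨⟩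
  rw [cc, this]
  split_ifs <;> simp

theorem cc_succ (l m k : ℕ) : cc (l + 1) (m + 1) k =
    cc (l + 1) m k + if m + 1 ≤ k then cc l (m + 1) (k - (m + 1)) else 0 := by
  have : TT (l + 1) (m + 1) k = TT (l + 1) m k ∪
      if m + 1 ≤ k then (fun s => (m + 1) ::ₘ s) '' TT l (m + 1) (k - (m + 1)) else ∅ := by
    ext s
    constructor
    · rintro ⟨h1, h2, h3⟩
      by_cases hs : m + 1 ∈ s
      · right
        obtain ⟨t, rfl⟩ := Multiset.exists_cons_of_mem hs
        simp only [Multiset.sum_cons] at h3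
        rw [if_pos (by omega)]
        refine ⟨t, ⟨by simpa using h1, fun i hi => h2 i (Multiset.mem_cons_of_mem hi), by omega⟩, rfl⟩
      · left
        refine ⟨h1, fun i hi => ?_, h3⟩
        have : i ≠ m + 1 := by rintro rfl; exact hs hi
        have := h2 i hi
        omega
    · rintro (⟨h1, h2, h3⟩ | h)
      · exact ⟨h1, fun i hi => (h2 i hi).trans (Nat.le_succ m), h3⟩
      · split_ifs at h with hk
        · obtain ⟨t, ⟨h1, h2, h3⟩, rfl⟩ := h
          refine ⟨by simpa using h1, fun i hi => ?_, ?_⟩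
          · rcases Multiset.mem_cons.1 hi with rfl | hi
            · exact le_rfl
            · exact h2 i hi
          · simp only [Multiset.sum_cons]; omega
        · exact absurd h (Set.notMem_empty _)
  have hinj : Function.Injective (fun s : Multiset ℕ => (m + 1) ::ₘ s) :=
    fun a b h => (Multiset.cons_inj_right _).1 h
  rw [cc, this]
  split_ifs with hk
  · rw [Set.ncard_union_eq ?_ (TT_finite _ _ _) ((TT_finite _ _ _).image _),
      Set.ncard_image_of_injective _ hinj]
    · rfl
    · rw [Set.disjoint_left]
      rintro s ⟨-, h2, -⟩ ⟨t, -, rfl⟩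
      have := h2 (m + 1) (Multiset.mem_cons_self _ _)
      omega
  · rw [Set.union_empty]; rfl

open Polynomial in
noncomputable def AA : ℕ → ℕ → ℕ[X]
  | 0, _ => 1
  | _ + 1, 0 => 1
  | l + 1, m + 1 => AA (l + 1) m + X ^ (m + 1) * AA l (m + 1)

theorem AA_zero_right (l : ℕ) : AA l 0 = 1 := by cases l <;> rw [AA]
theorem AA_zero_left (l : ℕ) : AA 0 l = 1 := by rw [AA]

theorem coeff_AA (l m k : ℕ) : (AA l m).coeff k = cc l m k := by
  induction l generalizing m k with
  | zero => rw [AA, cc_zero_left, Polynomial.coeff_one]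
  | succ l ihl =>
    induction m generalizing k with
    | zero => rw [AA, cc_zero_right, Polynomial.coeff_one]
    | succ m ihm =>
      rw [AA, cc_succ, Polynomial.coeff_add, Polynomial.coeff_X_pow_mul', ihm, ihl]

open Polynomial in
theorem AA_succ (l m : ℕ) : AA (l + 1) (m + 1) = AA (l + 1) m + X ^ (m + 1) * AA l (m + 1) := by
  rw [AA]

open Polynomial in
theorem AA_succ' (l m : ℕ) : AA (l + 1) (m + 1) = AA l (m + 1) + X ^ (l + 1) * AA (l + 1) m := by
  induction l generalizing m with
  | zero =>
    induction m with
    | zero => simp [AA]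
    | succ m ihm =>
      have e1 := AA_succ 0 m
      rw [AA_succ, AA_zero_left]
      rw [AA_zero_left] at ihm e1
      calc _ = (1 + X ^ (0 + 1) * AA (0 + 1) m) + X ^ (m + 1 + 1) * 1 := by rw [ihm]
        _ = 1 + X ^ (0 + 1) * (AA (0 + 1) m + X ^ (m + 1) * 1) := by ring
        _ = _ := by rw [e1]
  | succ l ihl =>
    induction m with
    | zero =>
      have e2 := AA_succ l 0
      have e3 := ihl 0
      rw [AA_succ]
      rw [AA_zero_right] at e2 e3 ⊢
      calc _ = 1 + X ^ (0 + 1) * (AA l (0 + 1) + X ^ (l + 1) * 1) := by rw [e3]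
        _ = (1 + X ^ (0 + 1) * AA l (0 + 1)) + X ^ (l + 1 + 1) * 1 := by ring
        _ = _ := by rw [e2]
    | succ m ihm =>
      have e1 := AA_succ (l + 1) m
      have e2 := AA_succ l (m + 1)
      have e3 := ihl (m + 1)
      rw [AA_succ]
      calc _ = (AA (l + 1) (m + 1) + X ^ (l + 1 + 1) * AA (l + 1 + 1) m)
              + X ^ (m + 1 + 1) * (AA l (m + 1 + 1) + X ^ (l + 1) * AA (l + 1) (m + 1)) := by
            rw [ihm, e3]
        _ = (AA (l + 1) (m + 1) + X ^ (m + 1 + 1) * AA l (m + 1 + 1))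
              + X ^ (l + 1 + 1) * (AA (l + 1 + 1) m + X ^ (m + 1) * AA (l + 1) (m + 1)) := by ring
        _ = _ := by rw [e1, e2]

theorem AA_symm (l m : ℕ) : AA l m = AA m l := by
  induction l generalizing m with
  | zero => rw [AA_zero_left, AA_zero_right]
  | succ l ihl =>
    induction m with
    | zero => rw [AA_zero_left, AA_zero_right]
    | succ m ihm => rw [AA_succ', AA, ihl, ihm]

theorem cc_symm (l m k : ℕ) : cc l m k = cc m l k := by
  rw [← coeff_AA, ← coeff_AA, AA_symm]

theorem filter_sum_ne_zero (s : Multiset ℕ) : (s.filter (· ≠ 0)).sum = s.sum := by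
  induction s using Multiset.induction_on with
  | empty => simp
  | cons a s ih =>
    by_cases h : a = 0
    · simp only [h, ne_eq, not_true_eq_false, not_false_eq_true, Multiset.filter_cons_of_neg,
        Multiset.sum_cons, zero_add]
      exact ih
    · rw [Multiset.filter_cons_of_pos (p := fun x : ℕ => x ≠ 0) _ h, Multiset.sum_cons, Multiset.sum_cons, ih]

theorem filter_add_zeros (s : Multiset ℕ) :
    s.filter (· ≠ 0) + Multiset.replicate (Multiset.card s - Multiset.card (s.filter (· ≠ 0))) 0
      = s := by
  have h := Multiset.filter_add_not (· ≠ 0) s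
  have h2 : s.filter (fun a => ¬ a ≠ 0)
      = Multiset.replicate (Multiset.card (s.filter (fun a => ¬ a ≠ 0))) 0 := by
    rw [Multiset.eq_replicate_card]
    intro b hb
    simpa using (Multiset.mem_filter.1 hb).2
  have h3 := congrArg Multiset.card h
  rw [Multiset.card_add] at h3
  rw [show Multiset.card s - Multiset.card (s.filter (· ≠ 0))
    = Multiset.card (s.filter (fun a => ¬ a ≠ 0)) by omega, ← h2, h]

theorem filter_parts {k : ℕ} (π : Nat.Partition k) (n : ℕ) :
    (π.parts + Multiset.replicate n 0).filter (· ≠ 0) = π.parts := by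
  rw [Multiset.filter_add, Multiset.filter_eq_self.2, Multiset.filter_eq_nil.2, add_zero]
  · intro a ha; simpa using Multiset.eq_of_mem_replicate ha
  · intro a ha; exact (π.parts_pos ha).ne'

theorem rect_eq (k l m : ℕ) : rectPartitions k l m = cc l m k := by
  rw [rectPartitions, cc, ← Nat.card_coe_set_eq]
  refine Nat.card_congr ⟨fun π => ⟨π.1.parts + Multiset.replicate (l - Multiset.card π.1.parts) 0,
      ?_, ?_, ?_⟩,
    fun s => ⟨⟨s.1.filter (· ≠ 0), ?_, ?_⟩, ?_, ?_⟩, ?_, ?_⟩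
  · have := π.2.1
    rw [Multiset.card_add, Multiset.card_replicate]; omega
  · intro i hi
    rcases Multiset.mem_add.1 hi with h | h
    · exact π.2.2 i h
    · rw [Multiset.eq_of_mem_replicate h]; exact Nat.zero_le _
  · rw [Multiset.sum_add, π.1.parts_sum]; simp
  · intro i hi
    exact Nat.pos_of_ne_zero (Multiset.mem_filter.1 hi).2
  · rw [filter_sum_ne_zero]; exact s.2.2.2
  · exact (Multiset.card_le_card (Multiset.filter_le _ _)).trans s.2.1.le
  · intro i hi; exact s.2.2.1 i (Multiset.mem_filter.1 hi).1
  · intro π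
    apply Subtype.ext
    apply Nat.Partition.ext
    exact filter_parts _ _
  · intro s
    apply Subtype.ext
    have := filter_add_zeros s.1
    rw [s.2.1] at this
    exact this

end Comb
def addL : List ℕ → List ℕ → List ℕ
  | [], ys => ys
  | x :: xs, [] => x :: xs
  | x :: xs, y :: ys => (x + y) :: addL xs ys

def shiftL : ℕ → List ℕ → List ℕ
  | 0, xs => xs
  | n + 1, xs => 0 :: shiftL n xs

def scanL (n : ℕ) : List (List ℕ) → List ℕ → List (List ℕ)
  | [], _ => []
  | x :: xs, acc => addL x (shiftL n acc) :: scanL n xs (addL x (shiftL n acc))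

/-- the list of coefficient lists of `A 1 m, …, A L m` -/
def rowL (L : ℕ) : ℕ → List (List ℕ)
  | 0 => List.replicate L [1]
  | m + 1 => scanL (m + 1) (rowL L m) [1]

def incL : ℕ → List ℕ → Bool
  | 0, _ => true
  | n + 1, x :: y :: ys => Nat.blt x y && incL n (y :: ys)
  | _ + 1, _ => false

def checkRow (m : ℕ) : Bool :=
  (List.range 8).all fun i =>
    incL ((i + 8) * m / 2 - 1) (((rowL 15 m).getD (i + 7) []).drop 1)

set_option maxRecDepth 100000 in
theorem checkAll : ((List.range 8).all fun j => checkRow (j+8)) = true := by decide +kernel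

/-! algebra -/
section Alg
open MvPolynomial

noncomputable def wt (m : ℕ) : Fin (m + 1) → ℤ × ℤ := fun i => (1, (i : ℕ))

theorem hom_mkDer {m : ℕ} (b : ℤ × ℤ) (f : Fin (m + 1) → MvPolynomial (Fin (m + 1)) ℚ)
    (hf : ∀ i, IsWeightedHomogeneous (wt m) (f i) (wt m i + b))
    {p : MvPolynomial (Fin (m + 1)) ℚ} {n : ℤ × ℤ} (hp : IsWeightedHomogeneous (wt m) p n) :
    IsWeightedHomogeneous (wt m) (mkDerivation ℚ f p) (n + b) := by
  induction hp using IsWeightedHomogeneous.induction_on with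
  | zero => rw [map_zero]; exact isWeightedHomogeneous_zero ..
  | add p q hp hq h1 h2 => rw [map_add]; exact h1.add h2
  | monomial d r hr =>
    rw [mkDerivation_monomial]
    refine (weightedHomogeneousSubmodule ℚ (wt m) (n + b)).smul_mem r ?_
    refine IsWeightedHomogeneous.sum _ _ _ fun i hi => ?_
    have h1 : IsWeightedHomogeneous (wt m)
        (monomial (d - Finsupp.single i 1) ((d i : ℕ) : ℚ)) (n - wt m i) := by
      apply isWeightedHomogeneous_monomial
      have h2 : d - Finsupp.single i 1 + Finsupp.single i 1 = d := by
        apply tsub_add_cancel_of_le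
        rw [Finsupp.single_le_iff]
        exact Nat.one_le_iff_ne_zero.2 (Finsupp.mem_support_iff.1 hi)
      have h3 := congrArg (Finsupp.weight (wt m)) h2
      rw [map_add, hr, Finsupp.weight_single] at h3
      rw [← h3]; simp
    have := h1.mul (hf i)
    rwa [show n - wt m i + (wt m i + b) = n + b by abel] at this

noncomputable def fD (m : ℕ) (i : Fin (m + 1)) : MvPolynomial (Fin (m + 1)) ℚ :=
  C ((i : ℕ) : ℚ) * X ⟨(i : ℕ) - 1, by omega⟩
noncomputable def fU (m : ℕ) (i : Fin (m + 1)) : MvPolynomial (Fin (m + 1)) ℚ :=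
  C ((m : ℚ) - ((i : ℕ) : ℚ)) * X ⟨min ((i : ℕ) + 1) m, by omega⟩
noncomputable def fH (m : ℕ) (i : Fin (m + 1)) : MvPolynomial (Fin (m + 1)) ℚ :=
  C ((m : ℚ) - 2 * ((i : ℕ) : ℚ)) * X i

noncomputable abbrev dD (m : ℕ) := mkDerivation ℚ (fD m)
noncomputable abbrev dU (m : ℕ) := mkDerivation ℚ (fU m)
noncomputable abbrev dH (m : ℕ) := mkDerivation ℚ (fH m)

theorem hom_D {m : ℕ} {p : MvPolynomial (Fin (m + 1)) ℚ} {l k : ℤ}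
    (hp : IsWeightedHomogeneous (wt m) p (l, k)) :
    IsWeightedHomogeneous (wt m) (dD m p) (l, k - 1) := by
  have := hom_mkDer (m := m) (0, -1) (fD m) ?_ hp
  · simpa [sub_eq_add_neg] using this
  intro i
  by_cases hi : (i : ℕ) = 0
  · simp only [fD, hi]; simp [isWeightedHomogeneous_zero]
  · have := (isWeightedHomogeneous_C (wt m) ((i : ℕ) : ℚ)).mul
      (isWeightedHomogeneous_X ℚ (wt m) (⟨(i : ℕ) - 1, by omega⟩ : Fin (m + 1)))
    have e : wt m i + (0, -1) = 0 + wt m ⟨(i : ℕ) - 1, by omega⟩ := by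
      simp only [wt, Prod.mk_add_mk, zero_add, Prod.mk.injEq]
      constructor
      · simp
      · push_cast [Nat.one_le_iff_ne_zero.2 hi]; ring
    rw [e]; exact this

theorem hom_U {m : ℕ} {p : MvPolynomial (Fin (m + 1)) ℚ} {l k : ℤ}
    (hp : IsWeightedHomogeneous (wt m) p (l, k)) :
    IsWeightedHomogeneous (wt m) (dU m p) (l, k + 1) := by
  have := hom_mkDer (m := m) (0, 1) (fU m) ?_ hp
  · simpa using this
  intro i
  by_cases hi : (i : ℕ) = m
  · simp only [fU, hi]; simp [isWeightedHomogeneous_zero]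
  · have := (isWeightedHomogeneous_C (wt m) ((m : ℚ) - ((i : ℕ) : ℚ))).mul
      (isWeightedHomogeneous_X ℚ (wt m) (⟨min ((i : ℕ) + 1) m, by omega⟩ : Fin (m + 1)))
    have e : wt m i + (0, 1) = 0 + wt m ⟨min ((i : ℕ) + 1) m, by omega⟩ := by
      have : min ((i : ℕ) + 1) m = i + 1 := by omega
      simp [wt, this]
    rw [e]; exact this

theorem comm_DU (m : ℕ) (p : MvPolynomial (Fin (m + 1)) ℚ) :
    dD m (dU m p) - dU m (dD m p) = dH m p := by
  rw [← Derivation.commutator_apply]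
  congr 1
  apply derivation_ext
  intro i
  rw [Derivation.commutator_apply]
  simp only [mkDerivation_X]
  have hl : ∀ (D : Derivation ℚ (MvPolynomial (Fin (m + 1)) ℚ) (MvPolynomial (Fin (m + 1)) ℚ))
      (c : ℚ) (q : MvPolynomial (Fin (m + 1)) ℚ), D (C c * q) = C c * D q := by
    intro D c q
    rw [← smul_eq_C_mul, ← smul_eq_C_mul, Derivation.map_smul]
  have h1 : mkDerivation ℚ (fD m) (fU m i) = C (((m : ℚ) - (i : ℕ)) * ((i : ℕ) + 1)) * X i := by
    simp only [fU, hl, mkDerivation_X, fD]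
    by_cases hi : (i : ℕ) = m
    · simp [hi]
    · have : min ((i : ℕ) + 1) m = i + 1 := by omega
      simp only [this]
      rw [← mul_assoc, ← C_mul]
      simp
  have h2 : mkDerivation ℚ (fU m) (fD m i) = C (((i : ℕ) : ℚ) * ((m : ℚ) - (i : ℕ) + 1)) * X i := by
    simp only [fU, hl, mkDerivation_X, fD]
    by_cases hi : (i : ℕ) = 0
    · simp [hi]
    · have : min ((i : ℕ) - 1 + 1) m = i := by omega
      simp only [this]
      rw [← mul_assoc, ← C_mul]
      push_cast [Nat.one_le_iff_ne_zero.2 hi]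
      congr 2
      ring_nf
  rw [h1, h2, fH, ← sub_mul, ← C_sub]
  congr 2
  ring

theorem H_hom {m : ℕ} {p : MvPolynomial (Fin (m + 1)) ℚ} {l k : ℤ}
    (hp : IsWeightedHomogeneous (wt m) p (l, k)) :
    dH m p = C ((l : ℚ) * m - 2 * k) * p := by
  generalize hn : (l, k) = n at hp
  induction hp using IsWeightedHomogeneous.induction_on with
  | zero => simp
  | add p q hp hq h1 h2 => rw [map_add, h1, h2, mul_add]
  | monomial d r hr =>
    rw [mkDerivation_monomial]
    have h1 : ∀ i ∈ d.support, (monomial (d - Finsupp.single i 1) ((d i : ℕ) : ℚ)) • fH m i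
        = monomial d ((d i : ℚ) * ((m : ℚ) - 2 * ((i : ℕ) : ℚ))) := by
      intro i hi
      have h2 : d - Finsupp.single i 1 + Finsupp.single i 1 = d := by
        apply tsub_add_cancel_of_le
        rw [Finsupp.single_le_iff]
        exact Nat.one_le_iff_ne_zero.2 (Finsupp.mem_support_iff.1 hi)
      rw [fH, X, C_mul_monomial, smul_eq_mul, monomial_mul, h2, mul_one]
    rw [Finsupp.sum, Finset.sum_congr rfl h1, ← map_sum, C_mul_monomial, smul_monomial]
    congr 1
    rw [← hn, Finsupp.weight_apply, Finsupp.sum] at hr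
    have e1 := congrArg Prod.fst hr
    have e2 := congrArg Prod.snd hr
    simp only [Prod.fst_sum, Prod.snd_sum, wt, Prod.smul_fst, Prod.smul_snd] at e1 e2
    rw [← e1, ← e2]
    push_cast
    simp only [mul_sub, Finset.sum_sub_distrib, Finset.sum_mul, Finset.mul_sum, smul_eq_mul]
    simp only [nsmul_eq_mul, mul_one, Int.cast_natCast, Finset.sum_mul, sub_mul,
      Int.cast_mul]
    congr 1 <;> exact Finset.sum_congr rfl fun i _ => by ring

theorem hom_neg {m : ℕ} {p : MvPolynomial (Fin (m + 1)) ℚ} {l k : ℤ}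
    (hp : IsWeightedHomogeneous (wt m) p (l, k)) (hk : k < 0) : p = 0 := by
  ext d
  by_contra h
  have := hp h
  rw [Finsupp.weight_apply, Finsupp.sum] at this
  have e2 := congrArg Prod.snd this
  simp only [Prod.snd_sum, wt, Prod.smul_snd] at e2
  have : 0 ≤ k := by rw [← e2]; positivity
  omega

theorem inj_aux {m : ℕ} (l : ℤ) (j : ℕ) : ∀ (k : ℤ), k < j → 2 * k < l * m → ∀ c : ℚ, 0 ≤ c →
    ∀ p : MvPolynomial (Fin (m + 1)) ℚ, IsWeightedHomogeneous (wt m) p (l, k) →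
    dD m (dU m p) + C c * p = 0 → p = 0 := by
  induction j with
  | zero => intro k hk _ c _ p hp _; exact hom_neg hp (by simpa using hk)
  | succ j ih =>
    intro k hk hkl c hc p hp h
    have hlam : (0 : ℚ) < (l : ℚ) * m - 2 * k := by
      have : ((2 * k : ℤ) : ℚ) < ((l * m : ℤ) : ℚ) := by exact_mod_cast hkl
      push_cast at this; linarith
    have h0 := comm_DU m p
    rw [H_hom hp] at h0
    have h1 : dU m (dD m p) + C ((l : ℚ) * m - 2 * k + c) * p = 0 := by
      rw [C_add, add_mul, ← h0, ← h]; ring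
    have h2 : dD m p = 0 := by
      refine ih (k - 1) (by push_cast at hk; omega) (by omega) ((l : ℚ) * m - 2 * k + c)
        (by linarith) _ (hom_D hp) ?_
      have := congrArg (dD m) h1
      rw [map_add, map_zero, ← smul_eq_C_mul, Derivation.map_smul, smul_eq_C_mul] at this
      exact this
    rw [h2, map_zero, zero_add] at h1
    rcases mul_eq_zero.1 h1 with h3 | h3
    · rw [C_eq_zero] at h3; linarith
    · exact h3

noncomputable abbrev WW (m : ℕ) (l k : ℤ) := weightedHomogeneousSubmodule ℚ (wt m) (l, k)

noncomputable def LD (m : ℕ) (l k : ℤ) : WW m l (k + 1) →ₗ[ℚ] WW m l k :=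
  LinearMap.restrict (dD m).toLinearMap fun p hp => by
    have := hom_D (p := p) (l := l) (k := k + 1) hp
    simpa using this
noncomputable def LU (m : ℕ) (l k : ℤ) : WW m l k →ₗ[ℚ] WW m l (k + 1) :=
  LinearMap.restrict (dU m).toLinearMap fun p hp => hom_U (p := p) (l := l) (k := k) hp

theorem LD_surj {m : ℕ} {l k : ℤ} [FiniteDimensional ℚ (WW m l k)] (h : 2 * k < l * m) :
    Function.Surjective (LD m l k) := by
  have hi : Function.Injective ((LD m l k) ∘ₗ (LU m l k)) := by
    rw [injective_iff_map_eq_zero]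
    intro p hp
    apply Subtype.ext
    refine inj_aux l (k + 1).toNat k (by omega) h 0 le_rfl p p.2 ?_
    have := congrArg Subtype.val hp
    rw [C_0, zero_mul, add_zero]
    exact this
  have hs := LinearMap.injective_iff_surjective.1 hi
  intro y
  obtain ⟨x, hx⟩ := hs y
  exact ⟨LU m l k x, hx⟩

def EE (m : ℕ) (l k : ℤ) : Prop := ∃ p : MvPolynomial (Fin (m + 1)) ℚ,
  p ≠ 0 ∧ IsWeightedHomogeneous (wt m) p (l, k) ∧ dD m p = 0

theorem EE_add {m : ℕ} {l k l' k' : ℤ} (h : EE m l k) (h' : EE m l' k') :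
    EE m (l + l') (k + k') := by
  obtain ⟨p, p0, hp, dp⟩ := h
  obtain ⟨q, q0, hq, dq⟩ := h'
  refine ⟨p * q, mul_ne_zero p0 q0, hp.mul hq, ?_⟩
  rw [Derivation.leibniz, dp, dq]; simp

theorem EE_zero (m l : ℕ) : EE m l 0 := by
  refine ⟨X 0 ^ l, pow_ne_zero _ (X_ne_zero _), ?_, ?_⟩
  · have := (isWeightedHomogeneous_X ℚ (wt m) 0).pow l
    convert this using 1
    simp [wt]
  · rw [Derivation.leibniz_pow, mkDerivation_X]
    simp [fD]

theorem EE_of_lt {m : ℕ} {l k : ℤ} [FiniteDimensional ℚ (WW m l k)]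
    [FiniteDimensional ℚ (WW m l (k + 1))]
    (h : Module.finrank ℚ (WW m l k) < Module.finrank ℚ (WW m l (k + 1))) : EE m l (k + 1) := by
  have h1 := LinearMap.ker_ne_bot_of_finrank_lt (f := LD m l k) h
  obtain ⟨p, hp, p0⟩ := Submodule.exists_mem_ne_zero_of_ne_bot h1
  refine ⟨p.1, fun h => p0 (Subtype.ext h), p.2, ?_⟩
  exact congrArg Subtype.val (LinearMap.mem_ker.1 hp)

theorem lt_of_EE {m : ℕ} {l k : ℤ} [FiniteDimensional ℚ (WW m l k)]
    [FiniteDimensional ℚ (WW m l (k + 1))] (hkl : 2 * k < l * m) (h : EE m l (k + 1)) :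
    Module.finrank ℚ (WW m l k) < Module.finrank ℚ (WW m l (k + 1)) := by
  obtain ⟨p, p0, hp, dp⟩ := h
  rw [← LinearMap.finrank_range_add_finrank_ker (LD m l k),
    LinearMap.range_eq_top.2 (LD_surj hkl), finrank_top]
  have : 0 < Module.finrank ℚ (LinearMap.ker (LD m l k)) := by
    refine (Module.finrank_pos_iff_exists_ne_zero (R := ℚ) (M := LinearMap.ker (LD m l k))).2 ?_
    refine ⟨⟨⟨p, hp⟩, ?_⟩, ?_⟩
    · rw [LinearMap.mem_ker]; apply Subtype.ext; exact dp
    · intro h; exact p0 (congrArg Subtype.val (congrArg Subtype.val h))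
  omega

end Alg

/-! ### Correctness of the list computation -/

def RepL (xs : List ℕ) (p : Polynomial ℕ) : Prop := ∀ k, xs.getD k 0 = p.coeff k

theorem getD_addL (xs ys : List ℕ) (k : ℕ) :
    (addL xs ys).getD k 0 = xs.getD k 0 + ys.getD k 0 := by
  induction xs generalizing ys k with
  | nil => simp [addL]
  | cons x xs ih =>
    cases ys with
    | nil => simp [addL]
    | cons y ys =>
      cases k with
      | zero => simp [addL]
      | succ k => simpa [addL] using ih ys k

theorem getD_shiftL (n : ℕ) (xs : List ℕ) (k : ℕ) :
    (shiftL n xs).getD k 0 = if n ≤ k then xs.getD (k - n) 0 else 0 := by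
  induction n generalizing k with
  | zero => simp [shiftL]
  | succ n ih =>
    cases k with
    | zero => simp [shiftL]
    | succ k =>
      have := ih k
      simp only [shiftL, List.getD_cons_succ, this, Nat.add_le_add_iff_right, Nat.add_sub_add_right]

theorem rep_step {xs ys : List ℕ} {l m : ℕ} (h1 : RepL xs (AA (l + 1) m))
    (h2 : RepL ys (AA l (m + 1))) :
    RepL (addL xs (shiftL (m + 1) ys)) (AA (l + 1) (m + 1)) := by
  intro k
  rw [getD_addL, getD_shiftL, AA_succ, Polynomial.coeff_add, Polynomial.coeff_X_pow_mul', h1 k,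
    h2 (k - (m + 1))]

theorem rep_one (l m : ℕ) (h : l = 0 ∨ m = 0) : RepL [1] (AA l m) := by
  have : AA l m = 1 := by
    rcases h with rfl | rfl
    · exact AA_zero_left _
    · exact AA_zero_right _
  intro k
  rw [this, Polynomial.coeff_one]
  cases k <;> simp

theorem rep_scanL (m : ℕ) (rows : List (List ℕ)) : ∀ (j : ℕ) (acc : List ℕ),
    (∀ i < rows.length, RepL (rows.getD i []) (AA (j + i + 1) m)) → RepL acc (AA j (m + 1)) →
    (scanL (m + 1) rows acc).length = rows.length ∧
    ∀ i < rows.length, RepL ((scanL (m + 1) rows acc).getD i []) (AA (j + i + 1) (m + 1)) := by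
  induction rows with
  | nil => intro j acc _ _; simp [scanL]
  | cons x xs ih =>
    intro j acc h hacc
    have hx : RepL (addL x (shiftL (m + 1) acc)) (AA (j + 1) (m + 1)) :=
      rep_step (by simpa using h 0 (by simp)) hacc
    have := ih (j + 1) (addL x (shiftL (m + 1) acc)) (fun i hi => by
      have := h (i + 1) (by simpa using hi)
      rw [List.getD_cons_succ] at this
      rwa [show j + 1 + i + 1 = j + (i + 1) + 1 by omega]) hx
    refine ⟨by simp [scanL, this.1], fun i hi => ?_⟩
    cases i with
    | zero => simpa [scanL] using hx
    | succ i =>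
      rw [scanL, List.getD_cons_succ]
      have := this.2 i (by simpa using hi)
      rwa [show j + 1 + i + 1 = j + (i + 1) + 1 by omega] at this

theorem rep_rowL (L m : ℕ) : (rowL L m).length = L ∧
    ∀ i < L, RepL ((rowL L m).getD i []) (AA (i + 1) m) := by
  induction m with
  | zero =>
    refine ⟨by simp [rowL], fun i hi => ?_⟩
    rw [rowL, List.getD_replicate _ hi]
    exact rep_one _ _ (Or.inr rfl)
  | succ m ih =>
    have := rep_scanL m (rowL L m) 0 [1] (fun i hi => by
      rw [zero_add]; exact ih.2 i (by rwa [ih.1] at hi)) (rep_one _ _ (Or.inl rfl))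
    rw [ih.1] at this
    simpa [rowL] using this

theorem incL_spec (n : ℕ) (xs : List ℕ) (h : incL n xs = true) :
    ∀ j < n, xs.getD j 0 < xs.getD (j + 1) 0 := by
  induction n generalizing xs with
  | zero => intro j hj; omega
  | succ n ih =>
    match xs, h with
    | x :: y :: ys, h =>
      rw [incL, Bool.and_eq_true] at h
      intro j hj
      cases j with
      | zero => simpa [Nat.blt_eq] using h.1
      | succ j => simpa using ih (y :: ys) h.2 j (by omega)
    | [], h => simp [incL] at h
    | [x], h => simp [incL] at h

def Good (l m : ℕ) : Prop := ∀ k, 2 ≤ k → 2 * k ≤ l * m → cc l m (k - 1) < cc l m k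

theorem good_base (l m : ℕ) (hl : 8 ≤ l) (hl' : l < 16) (hm : 8 ≤ m) (hm' : m < 16) :
    Good l m := by
  intro k hk hk2
  have h := List.all_eq_true.1 checkAll (m - 8) (List.mem_range.2 (by omega))
  rw [Nat.sub_add_cancel hm] at h
  have h2 := List.all_eq_true.1 h (l - 8) (List.mem_range.2 (by omega))
  rw [Nat.sub_add_cancel hl, show l - 8 + 7 = l - 1 by omega] at h2
  have h3 := incL_spec _ _ h2 (k - 2) (by omega)
  have h4 := (rep_rowL 15 m).2 (l - 1) (by omega)
  rw [Nat.sub_add_cancel (by omega : 1 ≤ l)] at h4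
  have h5 := h4 k
  have h6 := h4 (k - 1)
  rw [coeff_AA] at h5 h6
  rw [← h5, ← h6]
  simp only [List.getD_eq_getElem?_getD, List.getElem?_drop] at h3 ⊢
  rwa [show 1 + (k - 2) = k - 1 by omega, show 1 + (k - 2 + 1) = k by omega] at h3

/-! ### Dimension of the weight spaces -/

open MvPolynomial

def SS (l m k : ℕ) : Set (Fin (m + 1) →₀ ℕ) :=
  {d | Finsupp.weight (wt m) d = ((l : ℤ), (k : ℤ))}

theorem weight_toMultiset (m : ℕ) (d : Fin (m + 1) →₀ ℕ) : Finsupp.weight (wt m) d =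
    (((Multiset.card ((Finsupp.toMultiset d).map Fin.val) : ℕ) : ℤ),
      ((((Finsupp.toMultiset d).map Fin.val).sum : ℕ) : ℤ)) := by
  induction d using Finsupp.induction_linear with
  | zero => simp; rfl
  | add f g hf hg =>
    rw [map_add, hf, hg, map_add, Multiset.map_add, Multiset.card_add, Multiset.sum_add]
    simp
  | single i n =>
    rw [Finsupp.weight_single, Finsupp.toMultiset_single]
    simp [wt, Multiset.map_nsmul, Multiset.sum_nsmul]

theorem image_SS (l m k : ℕ) :
    (fun d : Fin (m + 1) →₀ ℕ => (Finsupp.toMultiset d).map Fin.val) '' SS l m k = TT l m k := by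
  ext s
  constructor
  · rintro ⟨d, hd, rfl⟩
    have hd : Finsupp.weight (wt m) d = ((l : ℤ), (k : ℤ)) := hd
    rw [weight_toMultiset, Prod.mk.injEq] at hd
    refine ⟨by exact_mod_cast hd.1, fun i hi => ?_, by exact_mod_cast hd.2⟩
    obtain ⟨j, -, rfl⟩ := Multiset.mem_map.1 hi
    omega
  · rintro ⟨h1, h2, h3⟩
    have key : (s.map (Fin.ofNat (m + 1))).map Fin.val = s := by
      rw [Multiset.map_map]
      conv_rhs => rw [← Multiset.map_id s]
      refine Multiset.map_congr rfl fun i hi => ?_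
      have := h2 i hi
      simp [Fin.ofNat, Nat.mod_eq_of_lt (Nat.lt_succ_of_le this)]
    have e : (Finsupp.toMultiset (Multiset.toFinsupp (s.map (Fin.ofNat (m + 1))))).map Fin.val
        = s := by
      rw [Multiset.toFinsupp_toMultiset, key]
    refine ⟨Multiset.toFinsupp (s.map (Fin.ofNat (m + 1))), ?_, e⟩
    change Finsupp.weight (wt m) _ = _
    rw [weight_toMultiset, e, h1, h3]

theorem inj_SS (m : ℕ) : Function.Injective
    (fun d : Fin (m + 1) →₀ ℕ => (Finsupp.toMultiset d).map Fin.val) := by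
  intro a b h
  exact Multiset.toFinsupp.symm.injective (Multiset.map_injective Fin.val_injective h)

theorem SS_finite (l m k : ℕ) : (SS l m k).Finite := by
  refine Set.Finite.of_finite_image ?_ (inj_SS m).injOn
  rw [image_SS]; exact TT_finite _ _ _

theorem SS_ncard (l m k : ℕ) : (SS l m k).ncard = cc l m k := by
  rw [cc, ← image_SS, Set.ncard_image_of_injective _ (inj_SS m)]

noncomputable def equivWW (l m k : ℕ) : WW m l k ≃ₗ[ℚ] (SS l m k →₀ ℚ) :=
  (LinearEquiv.ofEq _ _ (weightedHomogeneousSubmodule_eq_finsupp_supported ℚ (wt m) _)).trans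
    (AddMonoidAlgebra.supportedEquivFinsupp _)

instance finite_WW (l m k : ℕ) : FiniteDimensional ℚ (WW m l k) := by
  have := (SS_finite l m k).to_subtype
  exact Module.Finite.equiv (equivWW l m k).symm

theorem finrank_WW (l m k : ℕ) : Module.finrank ℚ (WW m l k) = cc l m k := by
  have := (SS_finite l m k).fintype
  rw [(equivWW l m k).finrank_eq, Module.finrank_finsupp_self, ← SS_ncard,
    ← Nat.card_coe_set_eq, Nat.card_eq_fintype_card]

theorem EE_of_cc {l m k : ℕ} (hk : 1 ≤ k) (h : cc l m (k - 1) < cc l m k) : EE m l k := by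
  obtain ⟨j, rfl⟩ := Nat.exists_eq_add_of_le' hk
  have : FiniteDimensional ℚ (WW m l ((j : ℤ) + 1)) := finite_WW l m (j + 1)
  have := EE_of_lt (m := m) (l := l) (k := j) (by
    have h1 := finrank_WW l m j
    have h2 := finrank_WW l m (j + 1)
    push_cast at h2
    rw [h1, h2]
    exact h)
  exact_mod_cast this

theorem cc_of_EE {l m k : ℕ} (hk : 1 ≤ k) (hk2 : 2 * k ≤ l * m) (h : EE m l k) :
    cc l m (k - 1) < cc l m k := by
  obtain ⟨j, rfl⟩ := Nat.exists_eq_add_of_le' hk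
  have : FiniteDimensional ℚ (WW m l ((j : ℤ) + 1)) := finite_WW l m (j + 1)
  have := lt_of_EE (m := m) (l := l) (k := j) (by
    have : 2 * j < l * m := by omega
    exact_mod_cast this) (by exact_mod_cast h)
  have h1 := finrank_WW l m j
  have h2 := finrank_WW l m (j + 1)
  push_cast at h2
  rw [h1, h2] at this
  exact this

theorem good_add {l m : ℕ} (hl : 8 ≤ l) (hm : 8 ≤ m) (h : Good l m) (h8 : Good 8 m) :
    Good (l + 8) m := by
  intro k hk hk2
  have hlm : 8 * 8 ≤ l * m := Nat.mul_le_mul hl hm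
  rw [add_mul] at hk2
  have key : ∃ a b, a + b = k ∧ (a = 0 ∨ 2 ≤ a) ∧ (b = 0 ∨ 2 ≤ b) ∧ 2 * a ≤ l * m ∧
      2 * b ≤ 8 * m := by
    by_cases h1 : 2 * k ≤ 8 * m
    · exact ⟨0, k, by omega⟩
    by_cases h2 : k = 4 * m + 1
    · exact ⟨2, 4 * m - 1, by omega⟩
    · exact ⟨k - 4 * m, 4 * m, by omega⟩
  obtain ⟨a, b, rfl, ha, hb, ha2, hb2⟩ := key
  have ea : EE m l a := by
    rcases ha with rfl | ha
    · exact EE_zero m l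
    · exact EE_of_cc (by omega) (h a ha ha2)
  have eb : EE m (8 : ℕ) b := by
    rcases hb with rfl | hb
    · exact EE_zero m 8
    · exact EE_of_cc (by omega) (h8 b hb hb2)
  refine cc_of_EE (by omega) (by rw [add_mul]; exact hk2) ?_
  have := EE_add ea eb
  exact_mod_cast this

theorem good_symm {l m : ℕ} (h : Good l m) : Good m l := by
  intro k hk hk2
  rw [cc_symm m l, cc_symm m l]
  exact h k hk (by rwa [mul_comm l m])

theorem good_left {m : ℕ} (hm : 8 ≤ m) (hb : ∀ l, 8 ≤ l → l < 16 → Good l m) (l : ℕ)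
    (hl : 8 ≤ l) : Good l m := by
  induction l using Nat.strong_induction_on with
  | _ l ih =>
    by_cases h : l < 16
    · exact hb l hl h
    · have := good_add (l := l - 8) (by omega) hm (ih (l - 8) (by omega) (by omega))
        (hb 8 le_rfl (by omega))
      rwa [Nat.sub_add_cancel hl] at this

theorem good_all (l m : ℕ) (hl : 8 ≤ l) (hm : 8 ≤ m) : Good l m := by
  refine good_left hm (fun l' h1 h2 => ?_) l hl
  apply good_symm
  exact good_left h1 (fun m' h3 h4 => good_base m' l' h3 h4 h1 h2) m hm

/-- Strict unimodality of Gaussian coefficients: for `ℓ, m ≥ 8` and `2 ≤ k ≤ ℓm/2`,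
one has `p_k(ℓ,m) − p_{k−1}(ℓ,m) ≥ 1`. -/
theorem strict_unimodality (ℓ m k : ℕ) (hl : 8 ≤ ℓ) (hm : 8 ≤ m)
    (hk : 2 ≤ k) (hk2 : 2 * k ≤ ℓ * m) :
    (rectPartitions k ℓ m : ℤ) - (rectPartitions (k - 1) ℓ m : ℤ) ≥ 1 := by
  rw [rect_eq, rect_eq]
  have := good_all ℓ m hl hm k hk hk2
  omega
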